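/- arXiv:1401.1407 — 4 statements merged into one kernel-verified Lean document; each statement's English description precedes it below -/
import Mathlib

section
/- Let K be an infinite field of characteristic ≠ 2 and n ≥ 1. The Zariski closure of the orthogonal similitude group GO_n(K) inside the space M_n(K) of all n×n matrices is exactly the set of all A ∈ M_n(K) such that AᵀJA = cJ = AJAᵀ for some c ∈ K (c allowed to be 0). That is, for A ∈ M_n(K): every polynomial in the matrix entries that vanishes identically on GO_n(K) vanishes at A if and only if there exists c ∈ K with AᵀJA = cJ and AJAᵀ = cJ. -/
open Matrix

/-- The matrix `J` of the standard symmetric bilinear form: `J i j = 1` if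
`i + j = n + 1` (with 1-based indices, i.e. `(i:ℕ) + (j:ℕ) + 1 = n` for
0-based `Fin n` indices), and `0` otherwise. -/
def Jorth (K : Type*) [Field K] (n : ℕ) : Matrix (Fin n) (Fin n) K :=
  Matrix.of fun i j => if (i : ℕ) + (j : ℕ) + 1 = n then 1 else 0


section Witt

variable {K V : Type*} [Field K] [AddCommGroup V] [Module K V]

lemma wt_refl (h2 : (2 : K) ≠ 0) (B : LinearMap.BilinForm K V) (hs : ∀ x y, B x y = B y x)
    (v w : V) (hv : B v v = 0) (hw : B w w = 0) (hvw : B v w ≠ 0) :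
    ∃ g : V →ₗ[K] V, (∀ x y, B (g x) (g y) = B x y) ∧ g v = w ∧
      ∀ x, B v x = 0 → B w x = 0 → g x = x := by
  have huu : B (v - w) (v - w) = -2 * B v w := by
    simp [hv, hw, hs w v]; ring
  have hne : B (v - w) (v - w) ≠ 0 := by
    rw [huu]; exact mul_ne_zero (neg_ne_zero.mpr h2) hvw
  refine ⟨LinearMap.id - (2 / B (v - w) (v - w)) • (B (v - w)).smulRight (v - w), ?_, ?_, ?_⟩
  · intro x y
    generalize v - w = u at *
    simp only [LinearMap.sub_apply, LinearMap.id_apply, LinearMap.smul_apply,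
      LinearMap.smulRight_apply, map_sub, map_smul, smul_eq_mul, hs x u]
    field_simp
    ring
  · have : B (v - w) v = - B v w := by simp [hv, hs w v]
    simp only [LinearMap.sub_apply, LinearMap.id_apply, LinearMap.smul_apply,
      LinearMap.smulRight_apply]
    rw [huu, this, smul_smul]
    have : 2 / (-2 * B v w) * -(B v w) = 1 := by field_simp
    rw [this]; simp
  · intro x h1 h3
    simp [h1, h3]

lemma wt_sep (B : LinearMap.BilinForm K V)
    (hrep : ∀ φ : Module.Dual K V, ∃ z, ∀ x, B z x = φ x) (S : Submodule K V) (v : V)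
    (hv : v ∉ S) : ∃ z, (∀ s ∈ S, B z s = 0) ∧ B z v ≠ 0 := by
  obtain ⟨φ, h1, h2⟩ := Submodule.exists_le_ker_of_notMem hv
  obtain ⟨z, hz⟩ := hrep φ
  exact ⟨z, fun s hs => by rw [hz]; exact h2 hs, by rw [hz]; exact h1⟩

lemma wt_step (h2 : (2 : K) ≠ 0) (B : LinearMap.BilinForm K V) (hs : ∀ x y, B x y = B y x)
    (hrep : ∀ φ : Module.Dual K V, ∃ z, ∀ x, B z x = φ x) (S : Submodule K V)
    (v w : V) (hv : B v v = 0) (hw : B w w = 0) (hvS : v ∉ S) (hwS : w ∉ S)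
    (hvp : ∀ s ∈ S, B v s = 0) (hwp : ∀ s ∈ S, B w s = 0) :
    ∃ g : V →ₗ[K] V, (∀ x y, B (g x) (g y) = B x y) ∧ g v = w ∧ ∀ s ∈ S, g s = s := by
  by_cases hvw : B v w = 0
  · have hz : ∃ z, (∀ s ∈ S, B z s = 0) ∧ B z v ≠ 0 ∧ B z w ≠ 0 := by
      obtain ⟨a, ha, hav⟩ := wt_sep B hrep S v hvS
      obtain ⟨b, hb, hbw⟩ := wt_sep B hrep S w hwS
      by_cases haw : B a w = 0
      · by_cases hbv : B b v = 0
        · refine ⟨a + b, fun s h => by simp [ha s h, hb s h], ?_, ?_⟩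
          · simpa [hbv] using hav
          · simpa [haw] using hbw
        · exact ⟨b, hb, hbv, hbw⟩
      · exact ⟨a, ha, hav, haw⟩
    obtain ⟨z, hzS, hzv, hzw⟩ := hz
    set y := z - (B z z / (2 * B z w)) • w with hy
    have hyy : B y y = 0 := by
      simp only [hy, map_sub, map_smul, LinearMap.sub_apply, LinearMap.smul_apply, smul_eq_mul,
        hw, hs w z]
      field_simp
      ring
    have hyv : B v y ≠ 0 := by
      simpa [hy, hvw, hs v z] using hzv
    have hyw : B y w ≠ 0 := by
      simpa [hy, hw] using hzw
    have hyS : ∀ s ∈ S, B y s = 0 := by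
      intro s h
      simp [hy, hzS s h, hwp s h]
    obtain ⟨g, hg, hgv, hgS⟩ := wt_refl h2 B hs v y hv hyy hyv
    obtain ⟨k, hk, hkv, hkS⟩ := wt_refl h2 B hs y w hyy hw hyw
    refine ⟨k ∘ₗ g, fun a b => by simp [hg, hk], by simp [hgv, hkv], fun s h => ?_⟩
    rw [LinearMap.comp_apply, hgS s (hvp s h) (hyS s h), hkS s (hyS s h) (hwp s h)]
  · obtain ⟨g, hg, hgv, hgS⟩ := wt_refl h2 B hs v w hv hw hvw
    exact ⟨g, hg, hgv, fun s h => hgS s (hvp s h) (hwp s h)⟩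

lemma wt_main (h2 : (2 : K) ≠ 0) (B : LinearMap.BilinForm K V) (hs : ∀ x y, B x y = B y x)
    (hrep : ∀ φ : Module.Dual K V, ∃ z, ∀ x, B z x = φ x) (r : ℕ) :
    ∀ (v w : Fin r → V), LinearIndependent K v → LinearIndependent K w →
    (∀ i j, B (v i) (v j) = 0) → (∀ i j, B (w i) (w j) = 0) →
    ∃ g : V →ₗ[K] V, (∀ x y, B (g x) (g y) = B x y) ∧ ∀ i, g (v i) = w i := by
  induction r with
  | zero => intro v w _ _ _ _; exact ⟨LinearMap.id, fun _ _ => rfl, fun i => i.elim0⟩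
  | succ r ih =>
    intro v w lv lw iv iw
    have lv' := linearIndependent_finSucc'.1 lv
    have lw' := linearIndependent_finSucc'.1 lw
    obtain ⟨g, hg, hgv⟩ := ih (Fin.init v) (Fin.init w) lv'.1 lw'.1
      (fun i j => iv _ _) (fun i j => iw _ _)
    have ginj : Function.Injective g := by
      rw [← LinearMap.ker_eq_bot, LinearMap.ker_eq_bot']
      intro m hm
      by_contra hne
      obtain ⟨z, -, hz⟩ := wt_sep B hrep ⊥ m (by simpa using hne)
      apply hz
      rw [← hg, hm]; simp
    have himg : Submodule.span K (Set.range (Fin.init w)) =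
        (Submodule.span K (Set.range (Fin.init v))).map g := by
      rw [Submodule.map_span, ← Set.range_comp]
      congr 2
      funext i
      exact (hgv i).symm
    have perp : ∀ x : V, (∀ i, B x (Fin.init w i) = 0) →
        ∀ s ∈ Submodule.span K (Set.range (Fin.init w)), B x s = 0 := by
      intro x hx s h
      have : Submodule.span K (Set.range (Fin.init w)) ≤ LinearMap.ker (B x) := by
        rw [Submodule.span_le]
        rintro _ ⟨i, rfl⟩
        exact hx i
      exact this h
    obtain ⟨k, hk, hkv, hkS⟩ := wt_step h2 B hs hrep
      (Submodule.span K (Set.range (Fin.init w))) (g (v (Fin.last r))) (w (Fin.last r))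
      (by rw [hg]; exact iv _ _) (iw _ _)
      (by
        rw [himg]
        rintro ⟨x, hx, hxe⟩
        rw [ginj hxe] at hx
        exact lv'.2 hx)
      lw'.2
      (perp _ fun i => by rw [← hgv, hg]; exact iv _ _)
      (perp _ fun i => iw _ _)
    refine ⟨k ∘ₗ g, fun a b => by simp [hg, hk], fun i => ?_⟩
    refine Fin.lastCases ?_ (fun i => ?_) i
    · simpa using hkv
    · have := hgv i
      simp only [Fin.init] at this
      rw [LinearMap.comp_apply, this]
      exact hkS _ (Submodule.subset_span ⟨i, rfl⟩)

end Witt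

section Mat

variable {K : Type*} [Field K] {n : ℕ}

lemma Jorth_transpose : (Jorth K n)ᵀ = Jorth K n := by
  ext i j
  simp [Jorth, Matrix.transpose_apply, add_comm (i : ℕ) (j : ℕ)]

lemma Jorth_eq (i j : Fin n) : Jorth K n i j = if j = Fin.rev i then 1 else 0 := by
  simp only [Jorth, Matrix.of_apply, Fin.ext_iff, Fin.val_rev]
  congr 1
  apply propext
  omega

lemma Jorth_sq : Jorth K n * Jorth K n = 1 := by
  ext i j
  rw [Matrix.mul_apply, Finset.sum_eq_single (Fin.rev i)]
  · simp [Jorth_eq, Matrix.one_apply, eq_comm]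
  · intro b _ hb
    simp [Jorth_eq i b, hb]
  · simp

lemma Jorth_flip (B : Matrix (Fin n) (Fin n) K) (c : K) (hc : c ≠ 0)
    (h : Bᵀ * Jorth K n * B = c • Jorth K n) : B * Jorth K n * Bᵀ = c • Jorth K n := by
  have h1 : (c⁻¹ • (Jorth K n * Bᵀ * Jorth K n)) * B = 1 := by
    rw [Matrix.smul_mul, Matrix.mul_assoc, Matrix.mul_assoc, ← Matrix.mul_assoc Bᵀ, h,
      Matrix.mul_smul, Jorth_sq, smul_smul, inv_mul_cancel₀ hc, one_smul]
  have h3 := mul_eq_one_comm.1 h1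
  have h4 : B * Jorth K n * Bᵀ * Jorth K n = c • (1 : Matrix (Fin n) (Fin n) K) := by
    rw [← h3, Matrix.mul_smul, smul_smul, mul_inv_cancel₀ hc, one_smul]
    simp only [Matrix.mul_assoc]
  calc B * Jorth K n * Bᵀ = B * Jorth K n * Bᵀ * Jorth K n * Jorth K n := by
        rw [Matrix.mul_assoc _ (Jorth K n) (Jorth K n), Jorth_sq, Matrix.mul_one]
    _ = _ := by rw [h4, Matrix.smul_mul, Matrix.one_mul]

lemma mat_witt (h2 : (2 : K) ≠ 0) {r : ℕ} (W W' : Matrix (Fin n) (Fin r) K)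
    (L L' : Matrix (Fin r) (Fin n) K) (hL : L * W = 1) (hL' : L' * W' = 1)
    (hW : Wᵀ * Jorth K n * W = 0) (hW' : W'ᵀ * Jorth K n * W' = 0) :
    ∃ P : Matrix (Fin n) (Fin n) K, Pᵀ * Jorth K n * P = Jorth K n ∧ P * W = W' := by
  have li : ∀ (W : Matrix (Fin n) (Fin r) K) (L : Matrix (Fin r) (Fin n) K), L * W = 1 →
      LinearIndependent K W.col := by
    intro W L h
    rw [← Matrix.mulVec_injective_iff]
    intro x y hxy
    have : L *ᵥ (W *ᵥ x) = L *ᵥ (W *ᵥ y) := congrArg _ hxy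
    simpa [Matrix.mulVec_mulVec, h] using this
  have iso : ∀ (W : Matrix (Fin n) (Fin r) K), Wᵀ * Jorth K n * W = 0 →
      ∀ i j, Matrix.toBilin' (Jorth K n) (W.col i) (W.col j) = 0 := by
    intro W h i j
    have := congrFun (congrFun h i) j
    rw [Matrix.mul_assoc] at this
    rw [Matrix.toBilin'_apply']
    exact this
  obtain ⟨g, hg, hgv⟩ := wt_main h2 (Matrix.toBilin' (Jorth K n))
    (fun x y => by
      rw [Matrix.toBilin'_apply', Matrix.toBilin'_apply', Matrix.dotProduct_mulVec,
        dotProduct_comm, ← Matrix.mulVec_transpose, Jorth_transpose])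
    (fun φ => by
      refine ⟨Jorth K n *ᵥ (fun i => φ (Pi.single i 1)), fun x => ?_⟩
      rw [Matrix.toBilin'_apply', Matrix.dotProduct_mulVec, ← Matrix.mulVec_transpose,
        Jorth_transpose, Matrix.mulVec_mulVec, Jorth_sq, Matrix.one_mulVec]
      conv_rhs => rw [pi_eq_sum_univ' x]
      simp [dotProduct, mul_comm])
    r W.col W'.col (li W L hL) (li W' L' hL') (iso W hW) (iso W' hW')
  refine ⟨LinearMap.toMatrix' g, ?_, ?_⟩
  · apply Matrix.toBilin'.injective
    rw [← Matrix.toBilin'_comp, Matrix.toLin'_toMatrix']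
    ext x y
    simp [hg]
  · ext i j
    have := congrFun (hgv j) i
    rw [← Matrix.toLin'_toMatrix' g, Matrix.toLin'_apply] at this
    exact this

lemma rank_fac (A : Matrix (Fin n) (Fin n) K) : ∃ (r : ℕ) (W R : Matrix (Fin n) (Fin r) K)
    (U L : Matrix (Fin r) (Fin n) K), A = W * U ∧ L * W = 1 ∧ U * R = 1 := by
  let p := LinearMap.range (Matrix.toLin' A)
  let b := Module.finBasis K p
  obtain ⟨l, hl⟩ := p.subtype.exists_leftInverse_of_injective p.ker_subtype
  obtain ⟨s, hs⟩ := (Matrix.toLin' A).rangeRestrict.exists_rightInverse_of_surjective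
    (LinearMap.range_rangeRestrict _)
  let e := b.equivFun
  let wl : (Fin _ → K) →ₗ[K] (Fin n → K) := p.subtype ∘ₗ e.symm.toLinearMap
  let ul : (Fin n → K) →ₗ[K] (Fin _ → K) := e.toLinearMap ∘ₗ (Matrix.toLin' A).rangeRestrict
  refine ⟨_, LinearMap.toMatrix' wl, LinearMap.toMatrix' (s ∘ₗ e.symm.toLinearMap),
    LinearMap.toMatrix' ul, LinearMap.toMatrix' (e.toLinearMap ∘ₗ l), ?_, ?_, ?_⟩
  · rw [← LinearMap.toMatrix'_comp, ← LinearMap.toMatrix'_toLin' A]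
    congr 1
    ext x
    simp [wl, ul]
  · rw [← LinearMap.toMatrix'_comp, ← LinearMap.toMatrix'_id]
    congr 1
    apply LinearMap.ext
    intro x
    have := LinearMap.congr_fun hl (e.symm x)
    simp only [LinearMap.comp_apply, LinearMap.id_apply] at this
    simp only [wl, LinearMap.comp_apply, LinearEquiv.coe_coe, this]
    simp
  · rw [← LinearMap.toMatrix'_comp, ← LinearMap.toMatrix'_id]
    congr 1
    apply LinearMap.ext
    intro x
    have := LinearMap.congr_fun hs (e.symm x)
    simp only [LinearMap.comp_apply, LinearMap.id_apply] at this
    simp [ul, this]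

/-- exponent for the degeneration curve -/
def dexp (n r : ℕ) (i : Fin n) : ℕ := if (i : ℕ) < r then 0 else if (i : ℕ) + r < n then 1 else 2

lemma dexp_rev (r : ℕ) (hr : 2 * r ≤ n) (i : Fin n) : dexp n r i + dexp n r (Fin.rev i) = 2 := by
  simp only [dexp, Fin.val_rev]
  split_ifs <;> omega

/-- standard isotropic frame -/
def Efr (K : Type*) [Field K] (n r : ℕ) : Matrix (Fin n) (Fin r) K :=
  Matrix.of fun i j => if (i : ℕ) = j then 1 else 0

lemma Efr_left (r : ℕ) (hr : 2 * r ≤ n) : (Efr K n r)ᵀ * Efr K n r = 1 := by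
  ext i j
  rw [Matrix.mul_apply, Finset.sum_eq_single (⟨i, by omega⟩ : Fin n)]
  · simp [Efr, Matrix.one_apply, Fin.ext_iff]
  · intro b _ hb
    have : (b : ℕ) ≠ i := fun h => hb (Fin.ext h)
    simp [Efr, this]
  · simp

lemma Efr_iso (r : ℕ) (hr : 2 * r ≤ n) : (Efr K n r)ᵀ * Jorth K n * Efr K n r = 0 := by
  ext i j
  rw [Matrix.mul_apply]
  simp only [Matrix.mul_apply, Finset.sum_mul]
  refine Finset.sum_eq_zero fun a _ => Finset.sum_eq_zero fun b _ => ?_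
  simp only [Efr, Jorth, Matrix.transpose_apply, Matrix.of_apply]
  split_ifs <;> first | omega | simp

lemma Efr_right (r : ℕ) (hr : 2 * r ≤ n) :
    Efr K n r * (Efr K n r)ᵀ = Matrix.diagonal fun i => (0 : K) ^ dexp n r i := by
  ext i j
  rw [Matrix.mul_apply]
  by_cases hi : (i : ℕ) < r
  · rw [Finset.sum_eq_single (⟨i, hi⟩ : Fin r)]
    · simp [Efr, Matrix.diagonal_apply, Fin.ext_iff, dexp, hi, eq_comm]
    · intro b _ hb
      have : (i : ℕ) ≠ b := fun h => hb (Fin.ext h.symm)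
      simp [Efr, this]
    · simp
  · rw [Finset.sum_eq_zero]
    · have : dexp n r i ≠ 0 := by
        simp only [dexp, hi]; split_ifs <;> simp_all
      simp [Matrix.diagonal_apply, this]
    · intro b _
      have : (i : ℕ) ≠ b := by omega
      simp [Efr, this]

lemma diag_mem (r : ℕ) (hr : 2 * r ≤ n) (t : K) :
    (Matrix.diagonal fun i : Fin n => t ^ dexp n r i) * Jorth K n *
      (Matrix.diagonal fun i : Fin n => t ^ dexp n r i) = t ^ 2 • Jorth K n := by
  ext i j
  rw [Matrix.mul_diagonal, Matrix.diagonal_mul, Matrix.smul_apply, Jorth_eq]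
  split_ifs with h
  · rw [h, ← dexp_rev r hr i, pow_add]; simp
  · simp

end Mat

lemma curve_lim {K : Type*} [Field K] [Infinite K] {σ : Type*} (q : σ → Polynomial K)
    (f : MvPolynomial σ K)
    (h : ∀ t : K, t ≠ 0 → MvPolynomial.eval (fun p => (q p).eval t) f = 0) :
    MvPolynomial.eval (fun p => (q p).eval 0) f = 0 := by
  have key : ∀ t : K, (MvPolynomial.aeval q f).eval t =
      MvPolynomial.eval (fun p => (q p).eval t) f := by
    intro t
    rw [← Polynomial.coe_evalRingHom, MvPolynomial.aeval_def, MvPolynomial.hom_eval₂,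
      MvPolynomial.eval, MvPolynomial.coe_eval₂Hom]
    congr 1
    ext x
    simp
  have : MvPolynomial.aeval q f = 0 := by
    apply Polynomial.eq_zero_of_infinite_isRoot
    refine Set.Infinite.mono ?_ (Set.Finite.infinite_compl (Set.finite_singleton (0 : K)))
    intro t ht
    change Polynomial.eval t _ = 0
    rw [key]
    exact h t ht
  rw [← key, this, Polynomial.eval_zero]

lemma zc_back {K : Type*} [Field K] [Infinite K]
    (h2 : (2 : K) ≠ 0) (n : ℕ) (A : Matrix (Fin n) (Fin n) K)
    (h1 : Aᵀ * Jorth K n * A = 0) (h3 : A * Jorth K n * Aᵀ = 0)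
    (f : MvPolynomial (Fin n × Fin n) K)
    (hf : ∀ B : Matrix (Fin n) (Fin n) K,
            (∃ c : K, c ≠ 0 ∧ Bᵀ * Jorth K n * B = c • Jorth K n) →
            MvPolynomial.eval (fun p => B p.1 p.2) f = 0) :
    MvPolynomial.eval (fun p => A p.1 p.2) f = 0 := by
  obtain ⟨r, W, R, U, L, hA, hL, hR⟩ := rank_fac A
  have hAR : A * R = W := by rw [hA, Matrix.mul_assoc, hR, Matrix.mul_one]
  have hLA : L * A = U := by rw [hA, ← Matrix.mul_assoc, hL, Matrix.one_mul]
  have hW : Wᵀ * Jorth K n * W = 0 := by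
    calc Wᵀ * Jorth K n * W = Rᵀ * (Aᵀ * Jorth K n * A) * R := by
          rw [← hAR, Matrix.transpose_mul]; simp only [Matrix.mul_assoc]
      _ = 0 := by rw [h1]; simp
  have hU : U * Jorth K n * Uᵀ = 0 := by
    calc U * Jorth K n * Uᵀ = L * (A * Jorth K n * Aᵀ) * Lᵀ := by
          rw [← hLA, Matrix.transpose_mul]; simp only [Matrix.mul_assoc]
      _ = 0 := by rw [h3]; simp
  have hr : 2 * r ≤ n := by
    have ha := Matrix.rank_add_rank_le_card_of_mul_eq_zero hW
    have e1 : r ≤ W.rank := by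
      have := Matrix.rank_mul_le_right L W
      rwa [hL, Matrix.rank_one, Fintype.card_fin] at this
    have e2 : r ≤ (Wᵀ * Jorth K n).rank := by
      have := Matrix.rank_mul_le_left (Wᵀ * Jorth K n) (Jorth K n * Lᵀ)
      rwa [Matrix.mul_assoc, ← Matrix.mul_assoc (Jorth K n), Jorth_sq, Matrix.one_mul,
        ← Matrix.transpose_mul, hL, Matrix.transpose_one, Matrix.rank_one,
        Fintype.card_fin] at this
    rw [Fintype.card_fin] at ha
    omega
  obtain ⟨P, hP, hPW⟩ := mat_witt h2 (Efr K n r) W _ L (Efr_left r hr) hL (Efr_iso r hr) hW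
  obtain ⟨Q, hQ, hQU⟩ := mat_witt h2 (Efr K n r) Uᵀ _ Rᵀ (Efr_left r hr)
    (by rw [← Matrix.transpose_mul, hR, Matrix.transpose_one]) (Efr_iso r hr)
    (by rwa [Matrix.transpose_transpose])
  have hQ' : Q * Jorth K n * Qᵀ = Jorth K n := by
    simpa using Jorth_flip Q 1 one_ne_zero (by simpa using hQ)
  let D : K → Matrix (Fin n) (Fin n) K := fun t => Matrix.diagonal fun i => t ^ dexp n r i
  let q : Fin n × Fin n → Polynomial K := fun p =>
    ∑ k, Polynomial.C (P p.1 k) * Polynomial.X ^ dexp n r k * Polynomial.C (Q p.2 k)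
  have hq : ∀ t p, (q p).eval t = (P * D t * Qᵀ) p.1 p.2 := by
    intro t p
    rw [Matrix.mul_apply]
    simp only [q, D, Polynomial.eval_finsetSum, Matrix.mul_diagonal, Matrix.transpose_apply,
      Polynomial.eval_mul, Polynomial.eval_C, Polynomial.eval_pow, Polynomial.eval_X]
  have hA0 : A = P * D 0 * Qᵀ := by
    have : D 0 = Efr K n r * (Efr K n r)ᵀ := (Efr_right r hr).symm
    rw [this, ← Matrix.mul_assoc, hPW, Matrix.mul_assoc, ← Matrix.transpose_mul, hQU,
      Matrix.transpose_transpose, hA]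
  have := curve_lim q f (fun t ht => by
    simp only [hq]
    refine hf _ ⟨t ^ 2, pow_ne_zero 2 ht, ?_⟩
    have hD : (D t)ᵀ = D t := Matrix.diagonal_transpose _
    calc (P * D t * Qᵀ)ᵀ * Jorth K n * (P * D t * Qᵀ)
        = Q * (D t * (Pᵀ * Jorth K n * P) * D t) * Qᵀ := by
          simp only [Matrix.transpose_mul, Matrix.transpose_transpose, hD, Matrix.mul_assoc]
      _ = t ^ 2 • (Q * Jorth K n * Qᵀ) := by
          rw [hP, diag_mem r hr, Matrix.mul_smul, Matrix.smul_mul]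
      _ = _ := by rw [hQ'])
  simp only [hq] at this
  rwa [hA0]

lemma zc_fwd {K : Type*} [Field K] (n : ℕ) (hn : 1 ≤ n) (A : Matrix (Fin n) (Fin n) K)
    (h : ∀ f : MvPolynomial (Fin n × Fin n) K,
        (∀ B : Matrix (Fin n) (Fin n) K,
            (∃ c : K, c ≠ 0 ∧ Bᵀ * Jorth K n * B = c • Jorth K n) →
            MvPolynomial.eval (fun p => B p.1 p.2) f = 0) →
        MvPolynomial.eval (fun p => A p.1 p.2) f = 0) :
    ∃ c : K, Aᵀ * Jorth K n * A = c • Jorth K n ∧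
        A * Jorth K n * Aᵀ = c • Jorth K n := by
  let i0 : Fin n := ⟨0, hn⟩
  let f1 : Fin n → Fin n → MvPolynomial (Fin n × Fin n) K := fun i j =>
    ∑ b, (∑ a, MvPolynomial.X (a, i) * MvPolynomial.C (Jorth K n a b)) * MvPolynomial.X (b, j)
  let f2 : Fin n → Fin n → MvPolynomial (Fin n × Fin n) K := fun i j =>
    ∑ b, (∑ a, MvPolynomial.X (i, a) * MvPolynomial.C (Jorth K n a b)) * MvPolynomial.X (j, b)
  have e1 : ∀ (B : Matrix (Fin n) (Fin n) K) i j,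
      MvPolynomial.eval (fun p => B p.1 p.2) (f1 i j) = (Bᵀ * Jorth K n * B) i j := by
    intro B i j
    simp [f1, Matrix.mul_apply]
  have e2 : ∀ (B : Matrix (Fin n) (Fin n) K) i j,
      MvPolynomial.eval (fun p => B p.1 p.2) (f2 i j) = (B * Jorth K n * Bᵀ) i j := by
    intro B i j
    simp [f2, Matrix.mul_apply]
  have hJ : Jorth K n i0 (Fin.rev i0) = 1 := by rw [Jorth_eq]; simp
  refine ⟨(Aᵀ * Jorth K n * A) i0 (Fin.rev i0), ?_, ?_⟩
  · ext i j
    have := h (f1 i j - f1 i0 (Fin.rev i0) * MvPolynomial.C (Jorth K n i j)) (by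
      rintro B ⟨c, hc, hB⟩
      rw [map_sub, map_mul, e1, e1, hB]
      simp [hJ])
    rw [map_sub, map_mul, e1, e1, MvPolynomial.eval_C] at this
    rw [Matrix.smul_apply, smul_eq_mul]
    exact sub_eq_zero.1 this
  · ext i j
    have := h (f2 i j - f1 i0 (Fin.rev i0) * MvPolynomial.C (Jorth K n i j)) (by
      rintro B ⟨c, hc, hB⟩
      rw [map_sub, map_mul, e1, e2, hB, Jorth_flip B c hc hB]
      simp [hJ])
    rw [map_sub, map_mul, e1, e2, MvPolynomial.eval_C] at this
    rw [Matrix.smul_apply, smul_eq_mul]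
    exact sub_eq_zero.1 this

/-- over an infinite field of characteristic `≠ 2`, the Zariski
closure of the orthogonal similitude group `GOₙ(K)` in `Mₙ(K)` is exactly
the set of matrices `A` with `AᵀJA = cJ = AJAᵀ` for some `c ∈ K`. -/
theorem zariski_closure_GO (K : Type*) [Field K] [Infinite K]
    (h2 : (2 : K) ≠ 0) (n : ℕ) (hn : 1 ≤ n) (A : Matrix (Fin n) (Fin n) K) :
    (∀ f : MvPolynomial (Fin n × Fin n) K,
        (∀ B : Matrix (Fin n) (Fin n) K,
            (∃ c : K, c ≠ 0 ∧ Bᵀ * Jorth K n * B = c • Jorth K n) →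
            MvPolynomial.eval (fun p => B p.1 p.2) f = 0) →
        MvPolynomial.eval (fun p => A p.1 p.2) f = 0)
    ↔ ∃ c : K, Aᵀ * Jorth K n * A = c • Jorth K n ∧
        A * Jorth K n * Aᵀ = c • Jorth K n := by
  constructor
  · exact zc_fwd n hn A
  · rintro ⟨c, h1, h3⟩ f hf
    by_cases hc : c = 0
    · subst hc
      exact zc_back h2 n A (by simpa using h1) (by simpa using h3) f hf
    · exact hf A ⟨c, hc, h1⟩
end

section
/- Let K be an infinite field and n = 2m with m ≥ 1. The Zariski closure of the symplectic similitude group GSp_n(K) inside the space M_n(K) of all n×n matrices is exactly the set of all A ∈ M_n(K) such that AᵀJA = cJ = AJAᵀ for some c ∈ K (c allowed to be 0). That is, for A ∈ M_n(K): every polynomial in the matrix entries that vanishes identically on GSp_n(K) vanishes at A if and only if there exists c ∈ K with AᵀJA = cJ and AJAᵀ = cJ. -/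
open Matrix

/-- The matrix `J` of the standard antisymmetric bilinear form on `K^(2m)`:
with 1-based indices, `J i j = 1` if `i ≤ m` and `j = n + 1 - i`,
`J i j = -1` if `i > m` and `j = n + 1 - i`, and `0` otherwise
(here in 0-based `Fin (2*m)` indices). -/
def Jsymp (K : Type*) [Field K] (m : ℕ) : Matrix (Fin (2 * m)) (Fin (2 * m)) K :=
  Matrix.of fun i j =>
    if (i : ℕ) + (j : ℕ) + 1 = 2 * m then (if (i : ℕ) < m then 1 else -1) else 0

section Witt
variable {K V : Type*} [Field K] [AddCommGroup V] [Module K V]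

def transv (B : LinearMap.BilinForm K V) (a : K) (v : V) : V →ₗ[K] V :=
  LinearMap.id + a • (B v).smulRight v

theorem transv_apply (B : LinearMap.BilinForm K V) (a : K) (v x : V) :
    transv B a v x = x + (a * B v x) • v := by
  simp [transv, mul_smul]

theorem transv_isom (B : LinearMap.BilinForm K V) (hB : B.IsAlt) (a : K) (v x y : V) :
    B (transv B a v x) (transv B a v y) = B x y := by
  have h1 : B x v = - B v x := (hB.neg_eq v x).symm
  simp only [transv_apply, map_add, map_smul, LinearMap.add_apply, LinearMap.smul_apply,
    smul_eq_mul, hB.self_eq_zero, h1]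
  ring

/-- one-step move -/
theorem transv_move (B : LinearMap.BilinForm K V) (hB : B.IsAlt) (u w : V) (h : B w u ≠ 0) :
    ∃ g : V →ₗ[K] V, (∀ x y, B (g x) (g y) = B x y) ∧ g u = w ∧
      ∀ x, B u x = 0 → B w x = 0 → g x = x := by
  refine ⟨transv B (B w u)⁻¹ (w - u), transv_isom B hB _ _, ?_, ?_⟩
  · rw [transv_apply]
    simp [hB.self_eq_zero, h]
  · intro x h1 h2
    rw [transv_apply]
    simp [h1, h2]

theorem exists_dual_vec [FiniteDimensional K V] (B : LinearMap.BilinForm K V)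
    (hn : B.Nondegenerate) {r : ℕ} (v : Fin r → V) (hv : LinearIndependent K v) (i : Fin r) :
    ∃ z, ∀ j, B z (v j) = if j = i then 1 else 0 := by
  classical
  obtain ⟨f, hf⟩ : ∃ f : V →ₗ[K] K, ∀ j, f (v j) = if j = i then 1 else 0 := by
    obtain ⟨f, hf⟩ := LinearMap.exists_extend (p := Submodule.span K (Set.range v))
      ((Finsupp.lapply (R := K) i).comp hv.repr)
    refine ⟨f, fun j => ?_⟩
    have := LinearMap.congr_fun hf ⟨v j, Submodule.subset_span ⟨j, rfl⟩⟩
    simp only [LinearMap.comp_apply, Submodule.subtype_apply] at this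
    rw [this]
    have h2 : hv.repr ⟨v j, Submodule.subset_span ⟨j, rfl⟩⟩ = Finsupp.single j 1 :=
      hv.repr_eq_single j _ rfl
    simp [h2, Finsupp.single_apply]
  refine ⟨(B.toDual hn).symm f, fun j => ?_⟩
  rw [← hf j, LinearMap.BilinForm.apply_toDual_symm_apply]

theorem witt_isotropic [FiniteDimensional K V] (B : LinearMap.BilinForm K V) (hB : B.IsAlt)
    (hn : B.Nondegenerate) (r : ℕ) (u w : Fin r → V) (hu : LinearIndependent K u)
    (hw : LinearIndependent K w) (hu0 : ∀ i j, B (u i) (u j) = 0)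
    (hw0 : ∀ i j, B (w i) (w j) = 0) :
    ∃ g : V →ₗ[K] V, (∀ x y, B (g x) (g y) = B x y) ∧ ∀ i, g (u i) = w i := by
  induction r with
  | zero => exact ⟨LinearMap.id, by simp, fun i => i.elim0⟩
  | succ r ih =>
    obtain ⟨g, hg, hgu⟩ := ih (fun i => u i.castSucc) (fun i => w i.castSucc)
      (hu.comp _ (Fin.castSucc_injective r)) (hw.comp _ (Fin.castSucc_injective r))
      (fun i j => hu0 _ _) (fun i j => hw0 _ _)
    have ginj : LinearMap.ker g = ⊥ := by
      rw [LinearMap.ker_eq_bot']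
      intro x hx
      apply (hn.1 x)
      intro y
      rw [← hg, hx]; simp
    have hgl : LinearIndependent K (fun i => g (u i)) := hu.map' g ginj
    obtain ⟨z1, hz1⟩ := exists_dual_vec B hn _ hgl (Fin.last r)
    obtain ⟨z2, hz2⟩ := exists_dual_vec B hn _ hw (Fin.last r)
    have key : ∃ z, (∀ i : Fin r, B z (w i.castSucc) = 0) ∧ B z (g (u (Fin.last r))) ≠ 0 ∧
        B z (w (Fin.last r)) ≠ 0 := by
      have a1 : ∀ i : Fin r, B z1 (w i.castSucc) = 0 := by
        intro i; rw [← hgu i, hz1]; simp [(Fin.castSucc_lt_last i).ne]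
      have a2 : ∀ i : Fin r, B z2 (w i.castSucc) = 0 := by
        intro i; rw [hz2]; simp [(Fin.castSucc_lt_last i).ne]
      have b1 := hz1 (Fin.last r)
      have b2 := hz2 (Fin.last r)
      simp only [if_true] at b1 b2
      by_cases c1 : B z1 (w (Fin.last r)) = 0
      · by_cases c2 : B z2 (g (u (Fin.last r))) = 0
        · exact ⟨z1 + z2, by simp [a1, a2], by simp [b1, c2], by simp [b2, c1]⟩
        · exact ⟨z2, a2, c2, by simp [b2]⟩
      · exact ⟨z1, a1, by simp [b1], c1⟩
    obtain ⟨z, za, zb, zc⟩ := key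
    have zc' : B (w (Fin.last r)) z ≠ 0 := by
      rw [← hB.neg_eq]; simpa using zc
    obtain ⟨h1, h1a, h1b, h1c⟩ := transv_move B hB _ _ zb
    obtain ⟨h2, h2a, h2b, h2c⟩ := transv_move B hB _ _ zc'
    refine ⟨h2 ∘ₗ h1 ∘ₗ g, by simp [h1a, h2a, hg], fun i => ?_⟩
    induction i using Fin.lastCases with
    | last => simp [h1b, h2b]
    | cast i =>
      simp only [LinearMap.comp_apply]
      have e : g (u i.castSucc) = w i.castSucc := hgu i
      rw [e, h1c _ _ (za i), h2c _ (za i) (hw0 _ _)]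
      rw [← e, hg]; exact hu0 _ _
end Witt

theorem rank_fact {K ι : Type*} [Field K] [Fintype ι] [DecidableEq ι] (A : Matrix ι ι K) :
    ∃ (r : ℕ) (P Q : Fin r → ι → K), LinearIndependent K P ∧ LinearIndependent K Q ∧
      A = (Matrix.of P)ᵀ * Matrix.of Q := by
  let R := LinearMap.range A.mulVecLin
  let b := Module.finBasis K R
  have hA : A = (Matrix.of fun i => (b i : ι → K))ᵀ *
      Matrix.of (fun i j => b.repr (A.mulVecLin.rangeRestrict (Pi.single j 1)) i) := by
    ext i j
    have := congrArg (fun x : R => (x : ι → K) i)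
      (b.sum_repr (A.mulVecLin.rangeRestrict (Pi.single j 1)))
    simp only [Submodule.coe_sum, Finset.sum_apply, Submodule.coe_smul, Pi.smul_apply,
      smul_eq_mul] at this
    simp only [Matrix.mul_apply, Matrix.transpose_apply, Matrix.of_apply]
    rw [Finset.sum_congr rfl (fun x _ => mul_comm _ _), this]
    simp
  refine ⟨_, _, _, ?_, ?_, hA⟩
  · exact b.linearIndependent.map' R.subtype (by simp)
  · rw [Fintype.linearIndependent_iff]
    intro c hc k
    obtain ⟨x, hx⟩ := A.mulVecLin.surjective_rangeRestrict (b k)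
    have h2 : ∀ y, ∑ i, c i * b.repr (A.mulVecLin.rangeRestrict y) i = 0 := by
      let F : (ι → K) →ₗ[K] K :=
        ∑ i, c i • (b.coord i ∘ₗ A.mulVecLin.rangeRestrict)
      have : F = 0 := by
        apply LinearMap.pi_ext'
        intro j
        ext
        have := congrFun hc j
        simpa [F, LinearMap.sum_apply] using this
      intro y
      have := LinearMap.congr_fun this y
      simpa [F, LinearMap.sum_apply] using this
    have := h2 x
    rw [hx] at this
    simpa [Finsupp.single_apply] using this

theorem Jt (K : Type*) [Field K] (m : ℕ)  : (Jsymp K m)ᵀ = -(Jsymp K m) := by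
  ext i j
  simp only [Jsymp, Matrix.transpose_apply, Matrix.of_apply, Matrix.neg_apply]
  split_ifs <;> first | omega | simp

theorem JJ (K : Type*) [Field K] (m : ℕ)  : (Jsymp K m) * (Jsymp K m) = -1 := by
  ext i j
  rw [Matrix.mul_apply, Finset.sum_eq_single i.rev]
  · simp only [Jsymp, Matrix.of_apply, Fin.val_rev, Matrix.neg_apply, Matrix.one_apply, Fin.ext_iff]
    split_ifs <;> first | omega | simp
  · intro k _ hk
    have : (i : ℕ) + k + 1 ≠ 2 * m := by
      intro h; apply hk; ext; rw [Fin.val_rev]; omega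
    simp [Jsymp, this]
  · simp

theorem Jalt (K : Type*) [Field K] (m : ℕ) 
    (x : Fin (2 * m) → K) : x ⬝ᵥ (Jsymp K m) *ᵥ x = 0 := by
  let L : Matrix (Fin (2 * m)) (Fin (2 * m)) K := Matrix.of fun i j =>
    if (i : ℕ) + (j : ℕ) + 1 = 2 * m ∧ (i : ℕ) < m then 1 else 0
  have : (Jsymp K m) = L - Lᵀ := by
    ext i j
    simp only [Jsymp, L, Matrix.transpose_apply, Matrix.of_apply, Matrix.sub_apply]
    split_ifs <;> first | omega | simp
  rw [this, Matrix.sub_mulVec, dotProduct_sub, Matrix.mulVec_transpose, dotProduct_comm x (x ᵥ* L),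
    Matrix.dotProduct_mulVec, sub_self]

theorem cancel_left {K ι : Type*} [Field K] [Fintype ι] {r : ℕ} {κ : Type*} (Q : Fin r → ι → K)
    (hQ : LinearIndependent K Q) (Y : Matrix (Fin r) κ K) (h : (Matrix.of Q)ᵀ * Y = 0) :
    Y = 0 := by
  have inj : Function.Injective ((Matrix.of Q)ᵀ).mulVec := by
    rw [Matrix.mulVec_injective_iff]; exact hQ
  ext i j
  have : Y.col j = 0 := by
    apply inj
    ext k
    have := congrFun (congrFun h k) j
    simpa [Matrix.mul_apply, Matrix.mulVec, dotProduct, Matrix.col] using this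
  exact congrFun this i

theorem cancel_both {K ι : Type*} [Field K] [Fintype ι] {r : ℕ} (Q : Fin r → ι → K)
    (hQ : LinearIndependent K Q) (Y : Matrix (Fin r) (Fin r) K)
    (h : (Matrix.of Q)ᵀ * (Y * Matrix.of Q) = 0) : Y = 0 := by
  have h1 := cancel_left Q hQ _ h
  have h2 := congrArg Matrix.transpose h1
  rw [Matrix.transpose_mul, Matrix.transpose_zero] at h2
  exact Matrix.transpose_eq_zero.1 (cancel_left Q hQ _ h2)

theorem JtJ (K : Type*) [Field K] (m : ℕ) : (Jsymp K m)ᵀ * Jsymp K m = 1 := by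
  rw [Jt, Matrix.neg_mul, JJ, neg_neg]

set_option maxHeartbeats 1000000 in
/-- every degenerate point lies on a line whose other points are similitudes -/
theorem exists_line {K : Type*} [Field K] (m : ℕ) (A : Matrix (Fin (2 * m)) (Fin (2 * m)) K)
    (h1 : Aᵀ * Jsymp K m * A = 0) (h2 : A * Jsymp K m * Aᵀ = 0) :
    ∃ G : Matrix (Fin (2 * m)) (Fin (2 * m)) K, ∀ t : K,
      (A + t • G)ᵀ * Jsymp K m * (A + t • G) = (t ^ 2) • Jsymp K m := by
  obtain ⟨r, P, Q, hP, hQ, hA⟩ := rank_fact A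
  have hP0 : Matrix.of P * Jsymp K m * (Matrix.of P)ᵀ = 0 := by
    apply cancel_both Q hQ
    rw [← h1, hA]
    simp only [Matrix.transpose_mul, Matrix.transpose_transpose, Matrix.mul_assoc]
  have hQ0 : Matrix.of Q * Jsymp K m * (Matrix.of Q)ᵀ = 0 := by
    apply cancel_both P hP
    rw [← h2, hA]
    simp only [Matrix.transpose_mul, Matrix.transpose_transpose, Matrix.mul_assoc]
  let B : LinearMap.BilinForm K (Fin (2 * m) → K) := Matrix.toBilin' (Jsymp K m)
  have hBa : ∀ x y, B x y = x ⬝ᵥ Jsymp K m *ᵥ y := fun x y => Matrix.toBilin'_apply' _ _ _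
  have hB : B.IsAlt := fun x => by rw [hBa]; exact Jalt K m x
  have hn : B.Nondegenerate := by
    apply LinearMap.BilinForm.nondegenerate_toBilin'_of_det_ne_zero'
    intro h0
    have := congrArg Matrix.det (JtJ K m)
    rw [Matrix.det_mul, h0] at this
    simp at this
  have hJinj : LinearMap.ker (Jsymp K m).mulVecLin = ⊥ := by
    rw [LinearMap.ker_eq_bot']
    intro x hx
    have : (Jsymp K m)ᵀ *ᵥ (Jsymp K m *ᵥ x) = 0 := by
      rw [← Matrix.mulVecLin_apply (Jsymp K m), hx, Matrix.mulVec_zero]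
    rwa [Matrix.mulVec_mulVec, JtJ, Matrix.one_mulVec] at this
  have hJJ : ∀ x y, (Jsymp K m *ᵥ x) ⬝ᵥ (Jsymp K m *ᵥ y) = x ⬝ᵥ y := by
    intro x y
    rw [Matrix.dotProduct_mulVec, ← Matrix.mulVec_transpose, Matrix.mulVec_mulVec, JtJ,
      Matrix.one_mulVec]
  obtain ⟨g, hg, hgu⟩ := witt_isotropic B hB hn r (fun i => Jsymp K m *ᵥ Q i) P
    (hQ.map' _ hJinj) hP
    (by
      intro i j
      rw [hBa, hJJ]
      have := congrFun (congrFun hQ0 i) j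
      rw [Matrix.mul_assoc, Matrix.mul_apply'] at this
      exact this)
    (by
      intro i j
      rw [hBa]
      have := congrFun (congrFun hP0 i) j
      rw [Matrix.mul_assoc, Matrix.mul_apply'] at this
      exact this)
  let G := LinearMap.toMatrix' g
  have hGg : ∀ x, g x = G *ᵥ x := fun x => (LinearMap.toMatrix'_mulVec g x).symm
  have hG : Gᵀ * Jsymp K m * G = Jsymp K m := by
    apply (Matrix.toBilin' (n := Fin (2 * m)) (R₁ := K)).injective
    refine LinearMap.ext fun x => LinearMap.ext fun y => ?_
    rw [Matrix.toBilin'_apply', ← Matrix.mulVec_mulVec, ← Matrix.mulVec_mulVec,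
      Matrix.dotProduct_mulVec, Matrix.vecMul_transpose, ← hGg, ← hGg, ← hBa, hg]
  have hA2 : A = G * Jsymp K m * ((Matrix.of Q)ᵀ * Matrix.of Q) := by
    rw [← Matrix.mul_assoc]
    conv_lhs => rw [hA]
    congr 1
    ext i j
    have := congrFun (hgu j) i
    rw [hGg, Matrix.mulVec_mulVec] at this
    exact this.symm
  set S := (Matrix.of Q)ᵀ * Matrix.of Q with hS
  have hSt : Sᵀ = S := by simp [hS, Matrix.transpose_mul]
  have e1 : Aᵀ * Jsymp K m * G = S := by
    have : Aᵀ * Jsymp K m * G = S * ((Jsymp K m)ᵀ * (Gᵀ * Jsymp K m * G)) := by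
      rw [hA2]
      simp only [Matrix.transpose_mul, hSt, Matrix.mul_assoc]
    rw [this, hG, JtJ, Matrix.mul_one]
  have e2 : Gᵀ * Jsymp K m * A = - S := by
    have : Gᵀ * Jsymp K m * A = (Gᵀ * Jsymp K m * G) * Jsymp K m * S := by
      rw [hA2]
      simp only [Matrix.mul_assoc]
    rw [this, hG, JJ, Matrix.neg_mul, Matrix.one_mul]
  refine ⟨G, fun t => ?_⟩
  rw [Matrix.transpose_add, Matrix.transpose_smul]
  simp only [Matrix.add_mul, Matrix.mul_add, Matrix.smul_mul, Matrix.mul_smul, h1, e1, e2, hG]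
  rw [smul_add, smul_smul, pow_two]
  simp

theorem flip_similitude {K : Type*} [Field K] (m : ℕ) (B : Matrix (Fin (2 * m)) (Fin (2 * m)) K)
    (c : K) (hc : c ≠ 0) (h : Bᵀ * Jsymp K m * B = c • Jsymp K m) :
    B * Jsymp K m * Bᵀ = c • Jsymp K m := by
  have h1 : (c⁻¹ • ((Jsymp K m)ᵀ * Bᵀ * Jsymp K m)) * B = 1 := by
    rw [Matrix.smul_mul, Matrix.mul_assoc, Matrix.mul_assoc, ← Matrix.mul_assoc Bᵀ, h,
      Matrix.mul_smul, JtJ, smul_smul, inv_mul_cancel₀ hc, one_smul]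
  have h2 := mul_eq_one_comm.1 h1
  rw [Jt] at h2
  have h3 : B * Jsymp K m * Bᵀ * Jsymp K m = -(c • 1) := by
    rw [← h2]
    simp [smul_smul, hc, Matrix.mul_assoc]
  have h4 := congrArg (· * (Jsymp K m)) h3
  simp only [Matrix.mul_assoc, JJ] at h4
  simpa [Matrix.mul_assoc] using h4

/-- polynomial coordinates of the universal matrix -/
noncomputable def genM (K : Type*) [Field K] (m : ℕ) : Matrix (Fin (2 * m)) (Fin (2 * m))
    (MvPolynomial (Fin (2 * m) × Fin (2 * m)) K) := Matrix.of fun i j => MvPolynomial.X (i, j)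

/-- the constant matrix `J` over the polynomial ring -/
noncomputable def genJ (K : Type*) [Field K] (m : ℕ) : Matrix (Fin (2 * m)) (Fin (2 * m))
    (MvPolynomial (Fin (2 * m) × Fin (2 * m)) K) :=
  Matrix.of fun i j => MvPolynomial.C (Jsymp K m i j)

theorem eval_form {K : Type*} [Field K] (m : ℕ) (B : Matrix (Fin (2 * m)) (Fin (2 * m)) K) (i j) :
    MvPolynomial.eval (fun p => B p.1 p.2)
      (((genM K m)ᵀ * genJ K m * genM K m) i j)
      = (Bᵀ * Jsymp K m * B) i j := by
  simp [Matrix.mul_apply, genM, genJ]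

theorem eval_form' {K : Type*} [Field K] (m : ℕ) (B : Matrix (Fin (2 * m)) (Fin (2 * m)) K) (i j) :
    MvPolynomial.eval (fun p => B p.1 p.2)
      ((genM K m * genJ K m * (genM K m)ᵀ) i j)
      = (B * Jsymp K m * Bᵀ) i j := by
  simp [Matrix.mul_apply, genM, genJ]

/-- over an infinite field, the Zariski closure of the symplectic
similitude group `GSpₙ(K)` (`n = 2m`) in `Mₙ(K)` is exactly the set of
matrices `A` with `AᵀJA = cJ = AJAᵀ` for some `c ∈ K`. -/
theorem zariski_closure_GSp (K : Type*) [Field K] [Infinite K]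
    (m : ℕ) (hm : 1 ≤ m) (A : Matrix (Fin (2 * m)) (Fin (2 * m)) K) :
    (∀ f : MvPolynomial (Fin (2 * m) × Fin (2 * m)) K,
        (∀ B : Matrix (Fin (2 * m)) (Fin (2 * m)) K,
            (∃ c : K, c ≠ 0 ∧ Bᵀ * Jsymp K m * B = c • Jsymp K m) →
            MvPolynomial.eval (fun p => B p.1 p.2) f = 0) →
        MvPolynomial.eval (fun p => A p.1 p.2) f = 0)
    ↔ ∃ c : K, Aᵀ * Jsymp K m * A = c • Jsymp K m ∧
        A * Jsymp K m * Aᵀ = c • Jsymp K m := by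
  constructor
  · intro H
    let i0 : Fin (2 * m) := ⟨0, by omega⟩
    let j0 : Fin (2 * m) := ⟨2 * m - 1, by omega⟩
    have hJ0 : Jsymp K m i0 j0 = 1 := by
      have : 0 + (2 * m - 1) + 1 = 2 * m := by omega
      simp only [Jsymp, Matrix.of_apply, i0, j0]
      rw [if_pos this, if_pos (by omega)]
    refine ⟨(Aᵀ * Jsymp K m * A) i0 j0, ?_, ?_⟩
    · ext i j
      have := H (((genM K m)ᵀ * genJ K m * genM K m) i j
        - ((genM K m)ᵀ * genJ K m * genM K m) i0 j0
          * MvPolynomial.C (Jsymp K m i j)) (by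
        rintro B ⟨c, hc, hB⟩
        rw [map_sub, map_mul, eval_form, eval_form, MvPolynomial.eval_C, hB]
        simp [hJ0])
      rw [map_sub, map_mul, eval_form, eval_form, MvPolynomial.eval_C] at this
      exact sub_eq_zero.1 this
    · ext i j
      have := H ((genM K m * genJ K m * (genM K m)ᵀ) i j
        - ((genM K m)ᵀ * genJ K m * genM K m) i0 j0
          * MvPolynomial.C (Jsymp K m i j)) (by
        rintro B ⟨c, hc, hB⟩
        rw [map_sub, map_mul, eval_form, eval_form', MvPolynomial.eval_C, hB,
          flip_similitude m B c hc hB]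
        simp [hJ0])
      rw [map_sub, map_mul, eval_form, eval_form', MvPolynomial.eval_C] at this
      exact sub_eq_zero.1 this
  · rintro ⟨c, h1, h2⟩ f hf
    by_cases hc : c = 0
    · subst hc
      rw [zero_smul] at h1 h2
      obtain ⟨G, hG⟩ := exists_line m A h1 h2
      let p : Polynomial K := MvPolynomial.aeval
        (fun q : Fin (2 * m) × Fin (2 * m) =>
          Polynomial.C (A q.1 q.2) + Polynomial.X * Polynomial.C (G q.1 q.2)) f
      have hp : ∀ t, p.eval t = MvPolynomial.eval (fun q => (A + t • G) q.1 q.2) f := by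
        intro t
        have : (Polynomial.aeval t) p = MvPolynomial.aeval (fun q => (A + t • G) q.1 q.2) f := by
          simp only [p]
          rw [← AlgHom.comp_apply, MvPolynomial.comp_aeval]
          congr 2
          ext q
          simp
          exact mul_comm _ _
        simpa [Polynomial.coe_aeval_eq_eval, MvPolynomial.coe_aeval_eq_eval] using this
      have hp0 : p = 0 := by
        apply Polynomial.eq_zero_of_infinite_isRoot
        apply Set.Infinite.mono _ (Set.finite_singleton (0 : K)).infinite_compl
        intro t ht
        have ht' : t ≠ 0 := ht
        show p.eval t = 0
        rw [hp]
        exact hf _ ⟨t ^ 2, pow_ne_zero 2 ht', hG t⟩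
      have := hp 0
      rw [hp0] at this
      simpa using this.symm
    · exact hf A ⟨c, hc, h1⟩
end

section
/- Let K be an algebraically closed field and n = 2m with m ≥ 1. Every matrix A in the symplectic monoid S_Sp(n,K) can be written as A = g·e·h where g, h ∈ GSp_n(K) and e is a diagonal idempotent matrix (a diagonal matrix with every diagonal entry equal to 0 or 1) that also lies in S_Sp(n,K). -/
open Matrix

/-- Upper half of `J`. -/
def Nsymp (K : Type*) [Field K] (m : ℕ) : Matrix (Fin (2 * m)) (Fin (2 * m)) K :=
  Matrix.of fun i j =>
    if (i : ℕ) + (j : ℕ) + 1 = 2 * m then (if (i : ℕ) < m then 1 else 0) else 0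

theorem J_eq_N (K : Type*) [Field K] (m : ℕ) :
    Jsymp K m = Nsymp K m - (Nsymp K m)ᵀ := by
  ext i j
  simp only [Jsymp, Nsymp, Matrix.of_apply, Matrix.sub_apply, Matrix.transpose_apply]
  split_ifs <;> first | omega | simp

theorem Jsymp_transpose (K : Type*) [Field K] (m : ℕ) : (Jsymp K m)ᵀ = - Jsymp K m := by
  simp [J_eq_N]

theorem J_sq (K : Type*) [Field K] (m : ℕ) : Jsymp K m * Jsymp K m = -1 := by
  ext i j
  rw [Matrix.mul_apply, Finset.sum_eq_single (Fin.rev i)]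
  · have := i.2
    have := j.2
    simp only [Jsymp, Matrix.of_apply, Matrix.neg_apply, Matrix.one_apply, Fin.val_rev, Fin.ext_iff]
    split_ifs <;> first | omega | simp
  · intro b _ hb
    have : ¬ ((i : ℕ) + b + 1 = 2 * m) := by
      intro h; apply hb; ext; simp [Fin.val_rev]; omega
    simp [Jsymp, this]
  · simp

theorem J_det (K : Type*) [Field K] (m : ℕ) : IsUnit (Jsymp K m).det := by
  rw [← Matrix.isUnit_iff_isUnit_det]
  have h : Jsymp K m * (- Jsymp K m) = 1 := by rw [mul_neg, J_sq, neg_neg]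
  have h' : (- Jsymp K m) * Jsymp K m = 1 := by rw [neg_mul, J_sq, neg_neg]
  exact ⟨⟨_, _, h, h'⟩, rfl⟩

theorem J_alt {K : Type*} [Field K] {m : ℕ} (x : Fin (2 * m) → K) :
    x ⬝ᵥ (Jsymp K m *ᵥ x) = 0 := by
  rw [J_eq_N, Matrix.sub_mulVec, dotProduct_sub, Matrix.mulVec_transpose, dotProduct_mulVec,
    dotProduct_comm x, sub_self]

theorem J_skew {K : Type*} [Field K] {m : ℕ} (x y : Fin (2 * m) → K) :
    x ⬝ᵥ (Jsymp K m *ᵥ y) = - (y ⬝ᵥ (Jsymp K m *ᵥ x)) := by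
  rw [dotProduct_mulVec, ← Matrix.mulVec_transpose, Jsymp_transpose, Matrix.neg_mulVec,
    neg_dotProduct, dotProduct_comm]

theorem entry_J {K : Type*} [Field K] {m : ℕ} {a b : Type*}
    (P : Matrix a (Fin (2 * m)) K) (Q : Matrix b (Fin (2 * m)) K) (i : a) (j : b) :
    (P * Jsymp K m * Qᵀ) i j = P i ⬝ᵥ (Jsymp K m *ᵥ Q j) := by
  rw [dotProduct_mulVec]
  rfl

theorem exists_rinv {K : Type*} [Field K] {r n : ℕ} (M : Matrix (Fin r) (Fin n) K)
    (h : M.rank = r) : ∃ Y : Matrix (Fin n) (Fin r) K, M * Y = 1 := by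
  rw [← Matrix.mulVec_surjective_iff_exists_right_inverse]
  have : LinearMap.range M.mulVecLin = ⊤ := by
    apply Submodule.eq_top_of_finrank_eq
    rw [Module.finrank_fin_fun]
    exact h
  exact LinearMap.range_eq_top.mp this

theorem isot_step {K : Type*} [Field K] {m r : ℕ} (V : Matrix (Fin r) (Fin (2 * m)) K)
    (hV : V.rank = r) (hJ : V * Jsymp K m * Vᵀ = 0) :
    r ≤ m ∧ (r < m → ∃ W : Matrix (Fin (r + 1)) (Fin (2 * m)) K, W.rank = r + 1 ∧
      W * Jsymp K m * Wᵀ = 0 ∧ ∀ i, W (Fin.castSucc i) = V i) := by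
  have hli : LinearIndependent K V.row := by
    rw [linearIndependent_iff_card_eq_finrank_span, Set.finrank,
      ← Matrix.rank_eq_finrank_span_row, hV, Fintype.card_fin]
  have h1 : (V * Jsymp K m).rank = r := by
    rw [Matrix.rank_mul_eq_left_of_isUnit_det _ _ (J_det K m), hV]
  have h2 := LinearMap.finrank_range_add_finrank_ker (V * Jsymp K m).mulVecLin
  rw [Module.finrank_fin_fun] at h2
  change (V * Jsymp K m).rank + _ = _ at h2
  rw [h1] at h2
  have hs : Module.finrank K (Submodule.span K (Set.range V.row)) = r := by
    rw [← Matrix.rank_eq_finrank_span_row, hV]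
  have hle : Submodule.span K (Set.range V.row) ≤
      LinearMap.ker (V * Jsymp K m).mulVecLin := by
    rw [Submodule.span_le]
    rintro _ ⟨i, rfl⟩
    ext j
    exact congrFun (congrFun hJ j) i
  have hfr := Submodule.finrank_mono hle
  rw [hs] at hfr
  refine ⟨by omega, fun hr => ?_⟩
  have : ∃ x ∈ LinearMap.ker (V * Jsymp K m).mulVecLin,
      x ∉ Submodule.span K (Set.range V.row) := by
    by_contra! hc
    have := Submodule.finrank_mono (show LinearMap.ker (V * Jsymp K m).mulVecLin ≤ _ from hc)
    omega
  obtain ⟨x, hx, hxs⟩ := this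
  have hx' : ∀ i, V i ⬝ᵥ (Jsymp K m *ᵥ x) = 0 := by
    intro i
    rw [dotProduct_mulVec]
    exact congrFun hx i
  obtain ⟨W, hWli, hWl, hWc⟩ : ∃ W : Matrix (Fin (r + 1)) (Fin (2 * m)) K,
      LinearIndependent K W.row ∧ W (Fin.last r) = x ∧ ∀ i, W (Fin.castSucc i) = V i := by
    have hsn : LinearIndependent K
        (Fin.snoc (α := fun _ => Fin (2 * m) → K) V.row x) :=
      linearIndependent_finSnoc.2 ⟨hli, hxs⟩
    exact ⟨Matrix.of (Fin.snoc (α := fun _ => Fin (2 * m) → K) V.row x), hsn,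
      Fin.snoc_last (α := fun _ => Fin (2 * m) → K) x V.row,
      fun i => Fin.snoc_castSucc (α := fun _ => Fin (2 * m) → K) x V.row i⟩
  refine ⟨W, ?_, ?_, hWc⟩
  · rw [hWli.rank_matrix, Fintype.card_fin]
  · ext i j
    rw [entry_J]
    have hVV : ∀ i j, V i ⬝ᵥ (Jsymp K m *ᵥ V j) = 0 := fun i j => by
      rw [← entry_J, hJ]; rfl
    refine Fin.lastCases ?_ (fun i => ?_) i <;> refine Fin.lastCases ?_ (fun j => ?_) j
    · rw [hWl, J_alt]; rfl
    · rw [hWl, hWc, J_skew, hx']; simp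
    · rw [hWl, hWc, hx']; rfl
    · rw [hWc, hWc, hVV]; rfl

theorem isot_extend {K : Type*} [Field K] {m : ℕ} (k : ℕ) : ∀ {r : ℕ}
    (V : Matrix (Fin r) (Fin (2 * m)) K) (_ : r + k = m)
    (_ : V.rank = r) (_ : V * Jsymp K m * Vᵀ = 0),
    ∃ W : Matrix (Fin m) (Fin (2 * m)) K, W.rank = m ∧
      W * Jsymp K m * Wᵀ = 0 ∧ ∀ (i : Fin r) (i' : Fin m), (i : ℕ) = i' → W i' = V i := by
  induction k with
  | zero =>
    intro r V h hV hJ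
    obtain rfl : r = m := by omega
    exact ⟨V, hV, hJ, fun i i' h => by rw [Fin.ext h]⟩
  | succ k ih =>
    intro r V h hV hJ
    obtain ⟨W, h1, h2, h3⟩ := (isot_step V hV hJ).2 (by omega)
    obtain ⟨W', h1', h2', h3'⟩ := ih W (by omega) h1 h2
    exact ⟨W', h1', h2', fun i i' hi => by rw [h3' i.castSucc i' (by simpa using hi), h3]⟩

theorem symp_of_rows {K : Type*} [Field K] {m : ℕ} (g : Matrix (Fin (2 * m)) (Fin (2 * m)) K)
    (h : g * Jsymp K m * gᵀ = Jsymp K m) : gᵀ * Jsymp K m * g = Jsymp K m := by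
  have h1 : g * (Jsymp K m * gᵀ * (- Jsymp K m)) = 1 := by
    rw [← mul_assoc, ← mul_assoc, h, mul_neg, J_sq, neg_neg]
  have h2 := mul_eq_one_comm.mp h1
  have h3 : Jsymp K m * (gᵀ * Jsymp K m * g) = -1 := by
    rw [← h2]; simp [mul_assoc]
  have h4 := congrArg (fun X => - Jsymp K m * X) h3
  simp only [← mul_assoc, neg_mul, J_sq] at h4
  simpa [mul_assoc] using h4

theorem exists_symp {K : Type*} [Field K] {m r : ℕ} (V : Matrix (Fin r) (Fin (2 * m)) K)
    (hV : V.rank = r) (hJ : V * Jsymp K m * Vᵀ = 0) :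
    ∃ g : Matrix (Fin (2 * m)) (Fin (2 * m)) K, g * Jsymp K m * gᵀ = Jsymp K m ∧
      ∀ (i : Fin r) (i' : Fin (2 * m)), (i : ℕ) = i' → g i' = V i := by
  obtain ⟨k, hk⟩ := Nat.exists_eq_add_of_le (isot_step V hV hJ).1
  obtain ⟨P, hP, hPJ, hPV⟩ := isot_extend k V hk.symm hV hJ
  have h1 : (P * Jsymp K m).rank = m := by
    rw [Matrix.rank_mul_eq_left_of_isUnit_det _ _ (J_det K m), hP]
  obtain ⟨Y, hY⟩ := exists_rinv _ h1
  have hY' : Yᵀ * Jsymp K m * Pᵀ = -1 := by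
    have := congrArg Matrix.transpose hY
    simp only [Matrix.transpose_mul, Jsymp_transpose, Matrix.transpose_one] at this
    rw [← this]; simp [Matrix.mul_assoc]
  obtain ⟨Q, hPQ, hQ⟩ : ∃ Q : Matrix (Fin m) (Fin (2 * m)) K,
      P * Jsymp K m * Qᵀ = 1 ∧ Q * Jsymp K m * Qᵀ = 0 := by
    let T : Matrix (Fin m) (Fin m) K := Yᵀ * Nsymp K m * Y
    have hT : Yᵀ * Jsymp K m * Y = T - Tᵀ := by
      simp only [T, J_eq_N, Matrix.mul_sub, Matrix.sub_mul, Matrix.transpose_mul,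
        Matrix.transpose_transpose, Matrix.mul_assoc]
    have hA : P * Jsymp K m * (Yᵀ - T * P)ᵀ = 1 := by
      rw [Matrix.transpose_sub, Matrix.transpose_mul, Matrix.transpose_transpose,
        Matrix.mul_sub, hY, ← Matrix.mul_assoc, hPJ, Matrix.zero_mul, sub_zero]
    refine ⟨Yᵀ - T * P, hA, ?_⟩
    rw [Matrix.sub_mul, Matrix.sub_mul, Matrix.mul_assoc T, Matrix.mul_assoc T, hA,
      Matrix.transpose_sub, Matrix.transpose_mul, Matrix.transpose_transpose,
      Matrix.mul_sub, ← Matrix.mul_assoc _ Pᵀ, hY', hT]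
    simp
  have ePP : ∀ i j, P i ⬝ᵥ (Jsymp K m *ᵥ P j) = 0 := fun i j => by
    rw [← entry_J, hPJ]; rfl
  have eQQ : ∀ i j, Q i ⬝ᵥ (Jsymp K m *ᵥ Q j) = 0 := fun i j => by
    rw [← entry_J, hQ]; rfl
  have ePQ : ∀ i j, P i ⬝ᵥ (Jsymp K m *ᵥ Q j) = if i = j then 1 else 0 := fun i j => by
    rw [← entry_J, hPQ, Matrix.one_apply]
  have eQP : ∀ i j, Q i ⬝ᵥ (Jsymp K m *ᵥ P j) = - if j = i then 1 else 0 := fun i j => by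
    rw [J_skew, ePQ]
  obtain ⟨g, hgP, hgQ⟩ : ∃ g : Matrix (Fin (2 * m)) (Fin (2 * m)) K,
      (∀ (i : Fin (2 * m)) (h : (i : ℕ) < m), g i = P ⟨i, h⟩) ∧
      (∀ (i : Fin (2 * m)) (_ : ¬ (i : ℕ) < m), g i = Q ⟨2 * m - 1 - i, by omega⟩) := by
    refine ⟨Matrix.of fun i => if h : (i : ℕ) < m then P.row ⟨i, h⟩ else
      Q.row ⟨2 * m - 1 - i, by omega⟩, fun i h => ?_, fun i h => ?_⟩
    · exact dif_pos h
    · exact dif_neg h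
  refine ⟨g, ?_, ?_⟩
  · ext i j
    rw [entry_J]
    have hJij : Jsymp K m i j = if (i : ℕ) + (j : ℕ) + 1 = 2 * m then
      (if (i : ℕ) < m then 1 else -1) else 0 := rfl
    rw [hJij]
    have hi2 := i.2
    have hj2 := j.2
    by_cases hi : (i : ℕ) < m <;> by_cases hj : (j : ℕ) < m
    · rw [hgP i hi, hgP j hj, ePP, if_neg (by omega)]
    · rw [hgP i hi, hgQ j hj, ePQ, if_pos hi]
      exact if_congr (by rw [Fin.mk.injEq]; omega) rfl rfl
    · rw [hgQ i hi, hgP j hj, eQP, if_neg hi]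
      simp only [Fin.mk.injEq]
      split_ifs <;> first | omega | simp
    · rw [hgQ i hi, hgQ j hj, eQQ, if_neg (by omega)]
  · intro i i' hi
    have : (i' : ℕ) < m := by omega
    rw [hgP i' this]
    exact hPV i ⟨i', this⟩ hi

theorem rank_fact_s7 {K : Type*} [Field K] {n : ℕ} (A : Matrix (Fin n) (Fin n) K) :
    ∃ (r : ℕ) (B : Matrix (Fin r) (Fin n) K) (C : Matrix (Fin r) (Fin n) K),
      B.rank = r ∧ C.rank = r ∧ A = Bᵀ * C := by
  have hr := A.rank_eq_finrank_span_row
  let b := Module.finBasisOfFinrankEq K (Submodule.span K (Set.range A.row)) hr.symm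
  let C : Matrix (Fin A.rank) (Fin n) K := Matrix.of fun i => (b i : Fin n → K)
  let B : Matrix (Fin A.rank) (Fin n) K := Matrix.of fun i k =>
    b.repr ⟨A.row k, Submodule.subset_span ⟨k, rfl⟩⟩ i
  have hABC : A = Bᵀ * C := by
    ext k l
    have := congrArg (fun x : Submodule.span K (Set.range A.row) => (x : Fin n → K) l)
      (b.sum_repr ⟨A.row k, Submodule.subset_span ⟨k, rfl⟩⟩)
    simp only [Submodule.coe_sum, Finset.sum_apply, Submodule.coe_smul, Pi.smul_apply,
      smul_eq_mul] at this
    rw [Matrix.mul_apply]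
    exact this.symm
  refine ⟨A.rank, B, C, ?_, ?_, hABC⟩
  · apply le_antisymm (by simpa using B.rank_le_height)
    calc A.rank = (Bᵀ * C).rank := by rw [← hABC]
      _ ≤ Bᵀ.rank := Matrix.rank_mul_le_left _ _
      _ = B.rank := Matrix.rank_transpose _
  · apply le_antisymm (by simpa using C.rank_le_height)
    calc A.rank = (Bᵀ * C).rank := by rw [← hABC]
      _ ≤ C.rank := Matrix.rank_mul_le_right _ _

/-- over an algebraically closed field, every matrix `A` in the
symplectic monoid `S_Sp(n,K)` (`n = 2m`) can be written `A = g * e * h` with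
`g, h ∈ GSpₙ(K)` and `e` a diagonal idempotent (all diagonal entries `0` or
`1`) which also lies in `S_Sp(n,K)`. -/
theorem symplectic_monoid_orbit_decomposition (K : Type*) [Field K]
    [IsAlgClosed K] (m : ℕ) (hm : 1 ≤ m)
    (A : Matrix (Fin (2 * m)) (Fin (2 * m)) K)
    (hA : ∃ c : K, Aᵀ * Jsymp K m * A = c • Jsymp K m ∧
        A * Jsymp K m * Aᵀ = c • Jsymp K m) :
    ∃ g h e : Matrix (Fin (2 * m)) (Fin (2 * m)) K,
      (∃ c : K, c ≠ 0 ∧ gᵀ * Jsymp K m * g = c • Jsymp K m) ∧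
      (∃ c : K, c ≠ 0 ∧ hᵀ * Jsymp K m * h = c • Jsymp K m) ∧
      (∃ d : Fin (2 * m) → K, e = Matrix.diagonal d ∧ ∀ i, d i = 0 ∨ d i = 1) ∧
      (∃ c : K, eᵀ * Jsymp K m * e = c • Jsymp K m ∧
          e * Jsymp K m * eᵀ = c • Jsymp K m) ∧
      A = g * e * h := by
  obtain ⟨c, hc1, hc2⟩ := hA
  by_cases hc : c = 0
  swap
  · refine ⟨A, 1, 1, ⟨c, hc, hc1⟩, ⟨1, one_ne_zero, by simp⟩, ⟨fun _ => 1, by simp, by simp⟩,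
      ⟨1, by simp, by simp⟩, by simp⟩
  subst hc
  rw [zero_smul] at hc1 hc2
  obtain ⟨r, B, C, hB, hC, rfl⟩ := rank_fact_s7 A
  obtain ⟨Y, hY⟩ := exists_rinv B hB
  obtain ⟨Z, hZ⟩ := exists_rinv C hC
  have hYt : Yᵀ * Bᵀ = 1 := by rw [← Matrix.transpose_mul, hY, Matrix.transpose_one]
  have hZt : Zᵀ * Cᵀ = 1 := by rw [← Matrix.transpose_mul, hZ, Matrix.transpose_one]
  have hBJ : B * Jsymp K m * Bᵀ = 0 := by
    have : (Zᵀ * Cᵀ) * (B * Jsymp K m * Bᵀ) * (C * Z) = 0 := by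
      have := congrArg (fun X => Zᵀ * X * Z) hc1
      simpa [Matrix.mul_assoc] using this
    simpa [hZ, hZt] using this
  have hCJ : C * Jsymp K m * Cᵀ = 0 := by
    have : (Yᵀ * Bᵀ) * (C * Jsymp K m * Cᵀ) * (B * Y) = 0 := by
      have := congrArg (fun X => Yᵀ * X * Y) hc2
      simpa [Matrix.mul_assoc] using this
    simpa [hY, hYt] using this
  have hrm : r ≤ m := (isot_step B hB hBJ).1
  obtain ⟨g, hg, hgB⟩ := exists_symp B hB hBJ
  obtain ⟨h, hh, hhC⟩ := exists_symp C hC hCJ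
  let d : Fin (2 * m) → K := fun i => if (i : ℕ) < r then 1 else 0
  have hdJ : Matrix.diagonal d * Jsymp K m * Matrix.diagonal d = 0 := by
    ext i j
    rw [Matrix.mul_diagonal, Matrix.diagonal_mul]
    simp only [d, Jsymp, Matrix.of_apply, Matrix.zero_apply]
    split_ifs <;> first | omega | simp
  refine ⟨gᵀ, h, Matrix.diagonal d, ⟨1, one_ne_zero, by simpa using hg⟩,
    ⟨1, one_ne_zero, by simpa using symp_of_rows h hh⟩, ⟨d, rfl, fun i => ?_⟩,
    ⟨0, by simpa using hdJ, by simpa using hdJ⟩, ?_⟩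
  · by_cases hi : (i : ℕ) < r <;> simp [d, hi]
  · let f : Fin r → Fin (2 * m) := Fin.castLE (by omega)
    let F : Matrix (Fin r) (Fin (2 * m)) K := Matrix.of fun i j => if f i = j then 1 else 0
    have hF : ∀ (M : Matrix (Fin (2 * m)) (Fin (2 * m)) K) (V : Matrix (Fin r) (Fin (2 * m)) K),
        (∀ (i : Fin r) (i' : Fin (2 * m)), (i : ℕ) = i' → M i' = V i) → V = F * M := by
      intro M V hMV
      ext i j
      simp [F, Matrix.mul_apply, hMV i (f i) rfl]
    have hFF : Fᵀ * F = Matrix.diagonal d := by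
      ext k l
      rw [Matrix.mul_apply, Matrix.diagonal_apply]
      simp only [F, Matrix.transpose_apply, Matrix.of_apply, d]
      by_cases hk : (k : ℕ) < r
      · rw [Finset.sum_eq_single ⟨k, hk⟩]
        · simp [hk, f]
        · intro b _ hb
          rw [if_neg, zero_mul]
          rintro rfl
          exact hb rfl
        · simp
      · rw [Finset.sum_eq_zero]
        · simp [hk]
        · intro b _
          rw [if_neg, zero_mul]
          rintro rfl
          exact hk b.2
    rw [← hFF, hF g B hgB, hF h C hhC, Matrix.transpose_mul]
    simp only [Matrix.mul_assoc]
end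

section
/- Let K be an algebraically closed field and n = 2m with m ≥ 1. The center of the symplectic monoid S_Sp(n,K) consists exactly of the scalar matrices: a matrix A ∈ S_Sp(n,K) satisfies AB = BA for all B ∈ S_Sp(n,K) if and only if A = c·1 for some c ∈ K (where 1 denotes the n×n identity matrix). -/
open Matrix

/-- over an algebraically closed field, the center of the
symplectic monoid `S_Sp(n,K)` (`n = 2m`) consists exactly of the scalar
matrices: for `A ∈ S_Sp(n,K)`, `A` commutes with every element of
`S_Sp(n,K)` iff `A = c • 1` for some `c ∈ K`. -/
theorem symplectic_monoid_center (K : Type*) [Field K] [IsAlgClosed K]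
    (m : ℕ) (hm : 1 ≤ m) (A : Matrix (Fin (2 * m)) (Fin (2 * m)) K)
    (hA : ∃ c : K, Aᵀ * Jsymp K m * A = c • Jsymp K m ∧
        A * Jsymp K m * Aᵀ = c • Jsymp K m) :
    (∀ B : Matrix (Fin (2 * m)) (Fin (2 * m)) K,
        (∃ c : K, Bᵀ * Jsymp K m * B = c • Jsymp K m ∧
            B * Jsymp K m * Bᵀ = c • Jsymp K m) →
        A * B = B * A)
    ↔ ∃ c : K, A = c • (1 : Matrix (Fin (2 * m)) (Fin (2 * m)) K) := by
  constructor
  · intro h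
    have hJ : ∀ i, Jsymp K m i i = 0 := by
      intro i
      have : ¬ ((i : ℕ) + (i : ℕ) + 1 = 2 * m) := by omega
      simp [Jsymp, this]
    have hS : A ∈ Set.range (Matrix.scalar (Fin (2 * m))) := by
      apply Matrix.mem_range_scalar_of_commute_single
      intro i j _
      refine (h (Matrix.single i j 1) ⟨0, ?_, ?_⟩).symm
      · rw [Matrix.transpose_single, Matrix.single_mul_mul_single, hJ]
        simp
      · rw [Matrix.transpose_single, Matrix.single_mul_mul_single, hJ]
        simp
    obtain ⟨c, hc⟩ := hS
    exact ⟨c, by rw [← hc, Matrix.scalar_apply, Matrix.smul_one_eq_diagonal]⟩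
  · rintro ⟨c, rfl⟩ B _
    simp
end
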